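/- Let r > 0 and let P be a finite set of points in the unit square [0,1]², and let G be the graph on P in which two points are adjacent iff their Euclidean distance is at most r. Suppose [0,1]² is partitioned into finitely many horizontal slabs [0,1] × [y_i, y_{i+1}] and, separately, into finitely many vertical slabs [x_j, x_{j+1}] × [0,1], and suppose that every horizontal slab contains a left-to-right crossing from P and every vertical slab contains a top-to-bottom crossing from P. Then all points belonging to any of these crossings lie in a single connected component of G. -/

import Mathlib

/-- `v 0 ⋯ v k` is a left-to-right crossing (from the point set `P`) of the
horizontal slab `[0,1] × [ylo, yhi]`, for connection radius `r` :
a chain of points of `P` contained in the slab whose first point is within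
Euclidean distance `r/5` of the left side, whose last point is within `r/5`
of the right side, and whose consecutive points are at distance at most `r/2`. -/
def IsLRCrossE (P : Set (EuclideanSpace ℝ (Fin 2))) (r ylo yhi : ℝ) (k : ℕ)
    (v : Fin (k + 1) → EuclideanSpace ℝ (Fin 2)) : Prop :=
  (∀ i, v i ∈ P) ∧
  (∀ i, v i 0 ∈ Set.Icc (0:ℝ) 1 ∧ v i 1 ∈ Set.Icc ylo yhi) ∧
  v 0 0 ≤ r / 5 ∧ 1 - r / 5 ≤ v (Fin.last k) 0 ∧
  ∀ i : Fin k, dist (v i.castSucc) (v i.succ) ≤ r / 2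

/-- `v 0 ⋯ v k` is a top-to-bottom crossing of the vertical slab
`[xlo, xhi] × [0,1]`. -/
def IsTBCrossE (P : Set (EuclideanSpace ℝ (Fin 2))) (r xlo xhi : ℝ) (k : ℕ)
    (v : Fin (k + 1) → EuclideanSpace ℝ (Fin 2)) : Prop :=
  (∀ i, v i ∈ P) ∧
  (∀ i, v i 0 ∈ Set.Icc xlo xhi ∧ v i 1 ∈ Set.Icc (0:ℝ) 1) ∧
  1 - r / 5 ≤ v 0 1 ∧ v (Fin.last k) 1 ≤ r / 5 ∧
  ∀ i : Fin k, dist (v i.castSucc) (v i.succ) ≤ r / 2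

/-!
If a left-to-right chain `a` and a top-to-bottom chain `b` stayed more than `δ` apart in the sup
norm, each difference `a i - b j` could be labelled by a side of the square `[-δ, δ]²` (right, top,
left, bottom, counted mod 4) beyond which it lies. Steps of length at most `δ` cannot carry a label
to the opposite one within a cell of the `(i, j)`-grid, so labels wind zero times around every cell,
hence zero times around the whole grid. But each side of the grid misses one label, which forces the
labels to wind once around its boundary. With `δ = r / 2` this produces two points at Euclidean
distance at most `√2 * (r / 2) ≤ r`, so every horizontal crossing is joined to every vertical one.
-/

section WindingNumber

variable {A : Type*} [AddCommGroup A] {m n : ℕ}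

theorem sum_succ_sub_castSucc (f : Fin (n + 1) → A) :
    ∑ i : Fin n, (f i.succ - f i.castSucc) = f (Fin.last n) - f 0 := by
  rw [Finset.sum_sub_distrib, eq_sub_of_add_eq' (Fin.sum_univ_succ f).symm,
    eq_sub_of_add_eq (Fin.sum_univ_castSucc f).symm]
  abel

/-- A discrete Green's theorem: `f` and `g` are the horizontal and vertical components of a
1-cochain on an `m × n` grid. -/
theorem sum_bottom_add_sum_right_eq_sum_left_add_sum_top
    (f : Fin m → Fin (n + 1) → A) (g : Fin (m + 1) → Fin n → A)
    (hcell : ∀ i j, f i j.castSucc + g i.succ j = g i.castSucc j + f i j.succ) :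
    ∑ i, f i 0 + ∑ j, g (Fin.last m) j = ∑ j, g 0 j + ∑ i, f i (Fin.last n) := by
  have hcurl : ∑ j, (g (Fin.last m) j - g 0 j) = ∑ i, (f i (Fin.last n) - f i 0) :=
    calc ∑ j, (g (Fin.last m) j - g 0 j)
        = ∑ j, ∑ i : Fin m, (g i.succ j - g i.castSucc j) :=
          Finset.sum_congr rfl fun j _ => (sum_succ_sub_castSucc (g · j)).symm
      _ = ∑ i, ∑ j : Fin n, (g i.succ j - g i.castSucc j) := Finset.sum_comm
      _ = ∑ i, ∑ j : Fin n, (f i j.succ - f i j.castSucc) :=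
          Finset.sum_congr rfl fun i _ => Finset.sum_congr rfl fun j _ =>
            sub_eq_sub_iff_add_eq_add.2 (by rw [add_comm, hcell, add_comm])
      _ = ∑ i, (f i (Fin.last n) - f i 0) :=
          Finset.sum_congr rfl fun i _ => sum_succ_sub_castSucc (f i)
  rw [Finset.sum_sub_distrib, Finset.sum_sub_distrib, sub_eq_sub_iff_add_eq_add] at hcurl
  rw [add_comm, hcurl, add_comm]

/-- The signed number of quarter turns from the direction `p` to the direction `q`. For opposite
directions, where the sign is ambiguous, the value is `2`. -/
def quarterTurns (p q : ZMod 4) : ℤ := (q - p).valMinAbs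

theorem quarterTurns_add_quarterTurns {p q s : ZMod 4}
    (hpq : q ≠ p + 2) (hqs : s ≠ q + 2) (hps : s ≠ p + 2) :
    quarterTurns p q + quarterTurns q s = quarterTurns p s := by
  revert p q s
  decide

theorem quarterTurns_eq_val_sub_val {e p q : ZMod 4} (hp : p ≠ e) (hq : q ≠ e) (hpq : q ≠ p + 2) :
    quarterTurns p q = ((q - e).val : ℤ) - (p - e).val := by
  revert e p q
  decide

theorem sum_quarterTurns_of_forall_ne {e : ZMod 4} {c : Fin (n + 1) → ZMod 4}
    (hce : ∀ i, c i ≠ e) (hstep : ∀ i : Fin n, c i.succ ≠ c i.castSucc + 2) :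
    ∑ i : Fin n, quarterTurns (c i.castSucc) (c i.succ) =
      ((c (Fin.last n) - e).val : ℤ) - (c 0 - e).val := by
  rw [← sum_succ_sub_castSucc fun i => ((c i - e).val : ℤ)]
  exact Finset.sum_congr rfl fun i _ => quarterTurns_eq_val_sub_val (hce _) (hce _) (hstep i)

theorem exists_opposite_of_sides_ne (c : Fin (m + 1) → Fin (n + 1) → ZMod 4)
    (hleft : ∀ j, c 0 j ≠ 0) (hright : ∀ j, c (Fin.last m) j ≠ 2)
    (hbottom : ∀ i, c i 0 ≠ 1) (htop : ∀ i, c i (Fin.last n) ≠ 3) :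
    (∃ (i : Fin m) (j : Fin (n + 1)), c i.succ j = c i.castSucc j + 2) ∨
      (∃ (i : Fin (m + 1)) (j : Fin n), c i j.succ = c i j.castSucc + 2) ∨
      ∃ (i : Fin m) (j : Fin n), c i.succ j.succ = c i.castSucc j.castSucc + 2 := by
  by_contra! ⟨hrow, hcol, hdiag⟩
  have hboundary := sum_bottom_add_sum_right_eq_sum_left_add_sum_top
    (fun i j => quarterTurns (c i.castSucc j) (c i.succ j))
    (fun i j => quarterTurns (c i j.castSucc) (c i j.succ))
    fun i j => (quarterTurns_add_quarterTurns (hrow i _) (hcol _ j) (hdiag i j)).trans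
      (quarterTurns_add_quarterTurns (hcol _ j) (hrow i _) (hdiag i j)).symm
  rw [sum_quarterTurns_of_forall_ne hbottom (hrow · 0),
    sum_quarterTurns_of_forall_ne hright (hcol (Fin.last m)),
    sum_quarterTurns_of_forall_ne hleft (hcol 0),
    sum_quarterTurns_of_forall_ne htop (hrow · (Fin.last n))] at hboundary
  have hcorners : ∀ p q s t : ZMod 4, p ≠ 0 → p ≠ 1 → q ≠ 2 → q ≠ 1 → s ≠ 0 → s ≠ 3 →
      t ≠ 2 → t ≠ 3 → ((q - 1).val : ℤ) - (p - 1).val + ((t - 2).val - (q - 2).val) ≠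
        ((s - 0).val : ℤ) - (p - 0).val + ((t - 3).val - (s - 3).val) := by
    decide
  exact hcorners _ _ _ _ (hleft 0) (hbottom 0) (hright 0) (hbottom _) (hleft _) (htop 0)
    (hright _) (htop _) hboundary

end WindingNumber

section CrossingChains

/-- The component of a plane vector in the direction with label `k`, the labels `0, 1, 2, 3`
standing for right, up, left and down, so that `k + 2` is opposite to `k`. -/
def directedCoord (k : ZMod 4) (w : Fin 2 → ℝ) : ℝ := ![w 0, w 1, -w 0, -w 1] k

theorem directedCoord_add_two (k : ZMod 4) (w : Fin 2 → ℝ) :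
    directedCoord (k + 2) w = -directedCoord k w := by
  fin_cases k
  exacts [rfl, rfl, (neg_neg _).symm, (neg_neg _).symm]

variable {m n : ℕ} {δ : ℝ}

theorem directedCoord_sub_le_dist (k : ZMod 4) (w w' : Fin 2 → ℝ) :
    directedCoord k w - directedCoord k w' ≤ dist w w' := by
  have hcoord (i : Fin 2) : |w i - w' i| ≤ dist w w' := dist_le_pi_dist w w' i
  fin_cases k
  · exact (abs_le.1 (hcoord 0)).2
  · exact (abs_le.1 (hcoord 1)).2
  · exact show -w 0 - -w' 0 ≤ dist w w' by linarith [(abs_le.1 (hcoord 0)).1]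
  · exact show -w 1 - -w' 1 ≤ dist w w' by linarith [(abs_le.1 (hcoord 1)).1]

theorem exists_lt_directedCoord {w : Fin 2 → ℝ} (hw : δ < ‖w‖) : ∃ k, δ < directedCoord k w := by
  by_contra! hle
  refine hw.not_ge ((pi_norm_le_iff_of_nonempty w).2 fun i => abs_le'.2 ?_)
  fin_cases i
  · exact ⟨hle 0, hle 2⟩
  · exact ⟨hle 1, hle 3⟩

theorem ne_add_two_of_lt_directedCoord {k k' : ZMod 4} {w w' : Fin 2 → ℝ}
    (hk : δ < directedCoord k w) (hk' : δ < directedCoord k' w') (hdist : dist w' w ≤ 2 * δ) :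
    k' ≠ k + 2 := by
  rintro rfl
  have := directedCoord_sub_le_dist (k + 2) w' w
  rw [directedCoord_add_two k w] at this
  linarith

theorem exists_dist_le_of_chains_cross {a : Fin (m + 1) → Fin 2 → ℝ} {b : Fin (n + 1) → Fin 2 → ℝ}
    (ha : ∀ i : Fin m, dist (a i.castSucc) (a i.succ) ≤ δ)
    (hb : ∀ j : Fin n, dist (b j.castSucc) (b j.succ) ≤ δ)
    (hleft : ∀ j, a 0 0 ≤ b j 0 + δ) (hright : ∀ j, b j 0 ≤ a (Fin.last m) 0 + δ)
    (htop : ∀ i, a i 1 ≤ b 0 1 + δ) (hbottom : ∀ i, b (Fin.last n) 1 ≤ a i 1 + δ) :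
    ∃ i j, dist (a i) (b j) ≤ δ := by
  by_contra! hfar
  choose c hc using fun i j =>
    exists_lt_directedCoord (δ := δ) (w := a i - b j) ((hfar i j).trans_eq (dist_eq_norm _ _))
  have hside {i j k} (hle : directedCoord k (a i - b j) ≤ δ) : c i j ≠ k := by
    rintro rfl
    exact (hc i j).not_ge hle
  have hne {i i' j j'} (hdist : dist (a i) (a i') + dist (b j) (b j') ≤ 2 * δ) :
      c i' j' ≠ c i j + 2 := by
    refine ne_add_two_of_lt_directedCoord (hc i j) (hc i' j') ?_
    rw [dist_comm]
    exact (dist_sub_sub_le _ _ _ _).trans hdist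
  obtain ⟨i, j, h⟩ | ⟨i, j, h⟩ | ⟨i, j, h⟩ := exists_opposite_of_sides_ne c
    (fun j => hside (show a 0 0 - b j 0 ≤ δ by linarith [hleft j]))
    (fun j => hside (show -(a (Fin.last m) 0 - b j 0) ≤ δ by linarith [hright j]))
    (fun i => hside (show a i 1 - b 0 1 ≤ δ by linarith [htop i]))
    (fun i => hside (show -(a i 1 - b (Fin.last n) 1) ≤ δ by linarith [hbottom i]))
  · exact hne (by linarith [ha i, dist_self (b j), dist_nonneg.trans (ha i)]) h
  · exact hne (by linarith [hb j, dist_self (a i), dist_nonneg.trans (hb j)]) h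
  · exact hne (by linarith [ha i, hb j]) h

end CrossingChains

theorem euclidean_dist_le_sqrt_card_mul_dist_ofLp {ι : Type*} [Fintype ι]
    (p q : EuclideanSpace ℝ ι) : dist p q ≤ √(Fintype.card ι) * dist p.ofLp q.ofLp := by
  simpa [Real.sqrt_eq_rpow] using (PiLp.antilipschitzWith_ofLp 2 fun _ : ι => ℝ).le_mul_dist p q

theorem nonempty_fin_of_apply_zero_ne_apply_last {α : Type*} {n : ℕ} {f : Fin (n + 1) → α}
    (hf : f 0 ≠ f (Fin.last n)) : Nonempty (Fin n) := by
  cases n with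
  | zero => exact (hf rfl).elim
  | succ n => exact ⟨0⟩

section GeometricGraph

variable {V : Type*} {G : SimpleGraph V}

theorem reachable_of_forall_reachable_succ {n : ℕ} {v : Fin (n + 1) → V}
    (hstep : ∀ i : Fin n, G.Reachable (v i.castSucc) (v i.succ)) (s t : Fin (n + 1)) :
    G.Reachable (v s) (v t) := by
  have hzero (s : Fin (n + 1)) : G.Reachable (v 0) (v s) := by
    induction s using Fin.induction with
    | zero => rfl
    | succ i ih => exact ih.trans (hstep i)
  exact (hzero s).symm.trans (hzero t)

theorem reachable_of_dist_le [PseudoMetricSpace V] {r : ℝ}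
    (hG : ∀ x y, x ≠ y → dist x y ≤ r → G.Adj x y) {x y : V} (hxy : dist x y ≤ r) :
    G.Reachable x y := by
  obtain rfl | hne := eq_or_ne x y
  · rfl
  · exact (hG x y hne hxy).reachable

theorem reachable_of_forall_dist_succ_le [PseudoMetricSpace V] {r : ℝ}
    (hG : ∀ x y, x ≠ y → dist x y ≤ r → G.Adj x y) {n : ℕ} {v : Fin (n + 1) → V}
    (hstep : ∀ i : Fin n, dist (v i.castSucc) (v i.succ) ≤ r) (s t : Fin (n + 1)) :
    G.Reachable (v s) (v t) :=
  reachable_of_forall_reachable_succ (fun i => reachable_of_dist_le hG (hstep i)) s t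

end GeometricGraph

section Crossings

variable {P : Set (EuclideanSpace ℝ (Fin 2))} {r ylo yhi xlo xhi : ℝ} {k l : ℕ}
  {v : Fin (k + 1) → EuclideanSpace ℝ (Fin 2)} {w : Fin (l + 1) → EuclideanSpace ℝ (Fin 2)}

theorem IsLRCrossE.exists_dist_le (hv : IsLRCrossE P r ylo yhi k v)
    (hw : IsTBCrossE P r xlo xhi l w)
    (hPsq : ∀ x ∈ P, x 0 ∈ Set.Icc (0 : ℝ) 1 ∧ x 1 ∈ Set.Icc (0 : ℝ) 1) :
    ∃ i j, dist (v i) (w j) ≤ r := by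
  obtain ⟨hvP, -, hv_left, hv_right, hv_step⟩ := hv
  obtain ⟨hwP, -, hw_top, hw_bottom, hw_step⟩ := hw
  have hr : 0 ≤ r := by linarith [(hPsq _ (hvP 0)).1.1]
  have hlip := PiLp.lipschitzWith_ofLp 2 fun _ : Fin 2 => ℝ
  obtain ⟨i, j, hij⟩ := exists_dist_le_of_chains_cross (δ := r / 2)
    (a := fun i => (v i).ofLp) (b := fun j => (w j).ofLp)
    (fun i => (hlip.dist_le_mul _ _).trans (by simpa using hv_step i))
    (fun j => (hlip.dist_le_mul _ _).trans (by simpa using hw_step j))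
    (fun j => by linarith [(hPsq _ (hwP j)).1.1])
    (fun j => by linarith [(hPsq _ (hwP j)).1.2])
    (fun i => by linarith [(hPsq _ (hvP i)).2.2])
    (fun i => by linarith [(hPsq _ (hvP i)).2.1])
  refine ⟨i, j, ?_⟩
  calc dist (v i) (w j)
      ≤ √2 * dist (v i).ofLp (w j).ofLp := by
        simpa using euclidean_dist_le_sqrt_card_mul_dist_ofLp (v i) (w j)
    _ ≤ 2 * (r / 2) :=
        mul_le_mul (Real.sqrt_le_iff.2 (by norm_num)) hij dist_nonneg zero_le_two
    _ = r := by ring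

theorem IsLRCrossE.reachable_of_isTBCrossE {G : SimpleGraph P}
    (hG : ∀ x y : P, x ≠ y → dist x y ≤ r → G.Adj x y)
    (hPsq : ∀ x ∈ P, x 0 ∈ Set.Icc (0 : ℝ) 1 ∧ x 1 ∈ Set.Icc (0 : ℝ) 1)
    (hv : IsLRCrossE P r ylo yhi k v) (hw : IsTBCrossE P r xlo xhi l w) {x y : P}
    (hx : ∃ s, v s = x) (hy : ∃ t, w t = y) : G.Reachable x y := by
  obtain ⟨i, j, hij⟩ := hv.exists_dist_le hw hPsq
  obtain ⟨s, hs⟩ := hx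
  obtain ⟨t, ht⟩ := hy
  obtain rfl : ⟨v s, hv.1 s⟩ = x := Subtype.ext hs
  obtain rfl : ⟨w t, hw.1 t⟩ = y := Subtype.ext ht
  have hr : r / 2 ≤ r := half_le_self (dist_nonneg.trans hij)
  have hv_reach : G.Reachable ⟨v s, hv.1 s⟩ ⟨v i, hv.1 i⟩ :=
    reachable_of_forall_dist_succ_le (v := fun i => ⟨v i, hv.1 i⟩) hG
      (fun i => (hv.2.2.2.2 i).trans hr) s i
  have hw_reach : G.Reachable ⟨w j, hw.1 j⟩ ⟨w t, hw.1 t⟩ :=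
    reachable_of_forall_dist_succ_le (v := fun j => ⟨w j, hw.1 j⟩) hG
      (fun j => (hw.2.2.2.2 j).trans hr) j t
  have hvw : G.Reachable ⟨v i, hv.1 i⟩ ⟨w j, hw.1 j⟩ := reachable_of_dist_le hG hij
  exact hv_reach.trans (hvw.trans hw_reach)

/-- The point `z` belongs to a crossing of one of the horizontal slabs `[0,1] × [ylo i, yhi i]` or
of one of the vertical slabs `[xlo j, xhi j] × [0,1]`. The slabs may overlap or leave gaps. -/
def LiesOnCrossing {ι κ : Type*} (P : Set (EuclideanSpace ℝ (Fin 2))) (r : ℝ)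
    (ylo yhi : ι → ℝ) (xlo xhi : κ → ℝ) (z : EuclideanSpace ℝ (Fin 2)) : Prop :=
  (∃ i k v, IsLRCrossE P r (ylo i) (yhi i) k v ∧ ∃ t, v t = z) ∨
    ∃ j k v, IsTBCrossE P r (xlo j) (xhi j) k v ∧ ∃ t, v t = z

theorem crossings_in_one_component_general {ι κ : Type*} [Nonempty ι] [Nonempty κ]
    (hPsq : ∀ x ∈ P, x 0 ∈ Set.Icc (0 : ℝ) 1 ∧ x 1 ∈ Set.Icc (0 : ℝ) 1)
    {G : SimpleGraph P} (hG : ∀ x y : P, x ≠ y → dist x y ≤ r → G.Adj x y)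
    {ylo yhi : ι → ℝ} {xlo xhi : κ → ℝ}
    (hLR : ∀ i, ∃ k v, IsLRCrossE P r (ylo i) (yhi i) k v)
    (hTB : ∀ j, ∃ k v, IsTBCrossE P r (xlo j) (xhi j) k v) (x y : P)
    (hx : LiesOnCrossing P r ylo yhi xlo xhi x) (hy : LiesOnCrossing P r ylo yhi xlo xhi y) :
    G.Reachable x y := by
  obtain ⟨k, v, hv⟩ := hLR (Classical.arbitrary ι)
  obtain ⟨l, w, hw⟩ := hTB (Classical.arbitrary κ)
  have hvw : G.Reachable ⟨v 0, hv.1 0⟩ ⟨w 0, hw.1 0⟩ :=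
    hv.reachable_of_isTBCrossE hG hPsq hw ⟨0, rfl⟩ ⟨0, rfl⟩
  have hub {z : P} : LiesOnCrossing P r ylo yhi xlo xhi z → G.Reachable z ⟨w 0, hw.1 0⟩ := by
    rintro (⟨i, k', v', hv', hz⟩ | ⟨j, l', w', hw', hz⟩)
    · exact hv'.reachable_of_isTBCrossE hG hPsq hw hz ⟨0, rfl⟩
    · exact (hv.reachable_of_isTBCrossE hG hPsq hw' ⟨0, rfl⟩ hz).symm.trans hvw
  exact (hub hx).trans (hub hy).symm

end Crossings

/-- If the unit square is partitioned into horizontal slabs (with cuts `ys`)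
and into vertical slabs (with cuts `xs`), every horizontal slab has a
left-to-right crossing from the finite point set `P` and every vertical slab a
top-to-bottom crossing, then all points lying on any such crossing belong to a
single connected component of the geometric graph `G` on `P` with radius `r`. -/
theorem crossings_in_one_component (r : ℝ) (hr : 0 < r)
    (P : Set (EuclideanSpace ℝ (Fin 2))) (hPfin : P.Finite)
    (hPsq : ∀ x ∈ P, x 0 ∈ Set.Icc (0:ℝ) 1 ∧ x 1 ∈ Set.Icc (0:ℝ) 1)
    (G : SimpleGraph ↥P)
    (hG : ∀ x y : ↥P, G.Adj x y ↔ x ≠ y ∧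
      dist (x : EuclideanSpace ℝ (Fin 2)) (y : EuclideanSpace ℝ (Fin 2)) ≤ r)
    (h' w' : ℕ) (ys : Fin (h' + 1) → ℝ) (xs : Fin (w' + 1) → ℝ)
    (hys0 : ys 0 = 0) (hys1 : ys (Fin.last h') = 1) (hysm : Monotone ys)
    (hxs0 : xs 0 = 0) (hxs1 : xs (Fin.last w') = 1) (hxsm : Monotone xs)
    (hLR : ∀ i : Fin h', ∃ k v, IsLRCrossE P r (ys i.castSucc) (ys i.succ) k v)
    (hTB : ∀ j : Fin w', ∃ k v, IsTBCrossE P r (xs j.castSucc) (xs j.succ) k v) :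
    ∀ x y : ↥P,
      ((∃ i : Fin h', ∃ k v, IsLRCrossE P r (ys i.castSucc) (ys i.succ) k v ∧
          ∃ t, v t = (x : EuclideanSpace ℝ (Fin 2))) ∨
        (∃ j : Fin w', ∃ k v, IsTBCrossE P r (xs j.castSucc) (xs j.succ) k v ∧
          ∃ t, v t = (x : EuclideanSpace ℝ (Fin 2)))) →
      ((∃ i : Fin h', ∃ k v, IsLRCrossE P r (ys i.castSucc) (ys i.succ) k v ∧
          ∃ t, v t = (y : EuclideanSpace ℝ (Fin 2))) ∨
        (∃ j : Fin w', ∃ k v, IsTBCrossE P r (xs j.castSucc) (xs j.succ) k v ∧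
          ∃ t, v t = (y : EuclideanSpace ℝ (Fin 2)))) →
      G.Reachable x y := by
  have : Nonempty (Fin h') := nonempty_fin_of_apply_zero_ne_apply_last
    (f := ys) (by simp [hys0, hys1])
  have : Nonempty (Fin w') := nonempty_fin_of_apply_zero_ne_apply_last
    (f := xs) (by simp [hxs0, hxs1])
  exact crossings_in_one_component_general hPsq (fun x y hne hxy => (hG x y).2 ⟨hne, hxy⟩)
    hLR hTB
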